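/- If an ideal A of D is expressible as A = (I₁I₂⋯Iₘ)* for finitely many *-homogeneous ideals I₁, …, Iₘ, then A is expressible as A = (J₁J₂⋯J_r)* where J₁, …, J_r are mutually *-comaximal *-homogeneous ideals, and this expression is unique up to order: if also A = (K₁K₂⋯K_s)* with K₁, …, K_s mutually *-comaximal *-homogeneous ideals, then r = s and the list K₁, …, K_s is a permutation of J₁, …, J_r. -/

import Mathlib

open scoped nonZeroDivisors

/-- A star operation on the nonzero fractional ideals of an integral domain `D`
with quotient field `K`: it fixes nonzero principal fractional ideals, commutes with
multiplication by nonzero principal fractional ideals, is extensive, monotone and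
idempotent (on nonzero fractional ideals). -/
structure StarOperation (D K : Type*) [CommRing D] [IsDomain D] [Field K]
    [Algebra D K] [IsFractionRing D K] where
  star : FractionalIdeal D⁰ K → FractionalIdeal D⁰ K
  star_spanSingleton : ∀ x : K, x ≠ 0 →
    star (FractionalIdeal.spanSingleton D⁰ x) = FractionalIdeal.spanSingleton D⁰ x
  star_smul : ∀ (x : K) (I : FractionalIdeal D⁰ K), x ≠ 0 → I ≠ 0 →
    star (FractionalIdeal.spanSingleton D⁰ x * I) = FractionalIdeal.spanSingleton D⁰ x * star I
  le_star : ∀ I : FractionalIdeal D⁰ K, I ≠ 0 → I ≤ star I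
  star_mono : ∀ I J : FractionalIdeal D⁰ K, I ≠ 0 → J ≠ 0 → I ≤ J → star I ≤ star J
  star_idem : ∀ I : FractionalIdeal D⁰ K, I ≠ 0 → star (star I) = star I

namespace StarOperation

variable {D K : Type*} [CommRing D] [IsDomain D] [Field K] [Algebra D K] [IsFractionRing D K]
variable (s : StarOperation D K)

/-- `*` has finite character: for every nonzero fractional ideal `I`, `I^*` is the union
of `J^*` over the nonzero finitely generated fractional subideals `J` of `I`. -/
def FiniteCharacter : Prop :=
  ∀ I : FractionalIdeal D⁰ K, I ≠ 0 → ∀ x ∈ s.star I,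
    ∃ J : FractionalIdeal D⁰ K, J ≠ 0 ∧ (J : Submodule D K).FG ∧ J ≤ I ∧ x ∈ s.star J

/-- A (nonzero) integral ideal `I` of `D` is a `*`-ideal if `I^* = I`. -/
def IsStarIdeal (I : Ideal D) : Prop :=
  I ≠ ⊥ ∧ s.star (I : FractionalIdeal D⁰ K) = (I : FractionalIdeal D⁰ K)

/-- An integral ideal `I` of `D` is a `*`-ideal of finite type if `I = J^*` for some
nonzero finitely generated ideal `J`. -/
def IsFiniteTypeStarIdeal (I : Ideal D) : Prop :=
  ∃ J : Ideal D, J ≠ ⊥ ∧ J.FG ∧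
    s.star (J : FractionalIdeal D⁰ K) = (I : FractionalIdeal D⁰ K)

/-- A maximal `*`-ideal: maximal among proper integral `*`-ideals. -/
def IsMaxStarIdeal (M : Ideal D) : Prop :=
  M ≠ ⊤ ∧ s.IsStarIdeal M ∧ ∀ J : Ideal D, J ≠ ⊤ → s.IsStarIdeal J → M ≤ J → J = M

/-- `I` is `*`-homogeneous: a proper `*`-ideal of finite type such that `(J + J')^* ≠ D`
for every pair `J`, `J'` of proper `*`-ideals of finite type containing `I`. -/
def IsHomog (I : Ideal D) : Prop :=
  I ≠ ⊤ ∧ s.IsStarIdeal I ∧ s.IsFiniteTypeStarIdeal I ∧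
    ∀ J J' : Ideal D, J ≠ ⊤ → J' ≠ ⊤ → s.IsStarIdeal J → s.IsStarIdeal J' →
      s.IsFiniteTypeStarIdeal J → s.IsFiniteTypeStarIdeal J' → I ≤ J → I ≤ J' →
      s.star ((J + J' : Ideal D) : FractionalIdeal D⁰ K) ≠ 1

/-- The set `M(I) = {x ∈ D : (xD + I)^* ≠ D}` attached to an ideal `I`. -/
def MSet (I : Ideal D) : Set D :=
  {x : D | s.star ((Ideal.span {x} + I : Ideal D) : FractionalIdeal D⁰ K) ≠ 1}

/-- `A` and `B` are `*`-comaximal if `(A + B)^* = D`. -/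
def StarComaximal (A B : Ideal D) : Prop :=
  s.star ((A + B : Ideal D) : FractionalIdeal D⁰ K) = 1

/-- An integral ideal `I` is `*`-invertible if `(I · I⁻¹)^* = D`. -/
def StarInvertible (I : Ideal D) : Prop :=
  s.star ((I : FractionalIdeal D⁰ K) * (I : FractionalIdeal D⁰ K)⁻¹) = 1

/-- `D` is a `*`-SH domain: every principal ideal generated by a nonzero nonunit is a
`*`-product of finitely many `*`-homogeneous ideals. -/
def IsSHDomain : Prop :=
  ∀ x : D, x ≠ 0 → ¬IsUnit x →
    ∃ T : Multiset (Ideal D), (∀ J ∈ T, s.IsHomog J) ∧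
      s.star ((T.prod : Ideal D) : FractionalIdeal D⁰ K) =
        ((Ideal.span {x} : Ideal D) : FractionalIdeal D⁰ K)

/-- `D` has finite `*`-character: every nonzero nonunit lies in only finitely many
maximal `*`-ideals. -/
def FiniteStarCharacter : Prop :=
  ∀ x : D, x ≠ 0 → ¬IsUnit x → {P : Ideal D | s.IsMaxStarIdeal P ∧ x ∈ P}.Finite

end StarOperation

namespace StarOperation

variable {D K : Type*} [CommRing D] [IsDomain D] [Field K] [Algebra D K] [IsFractionRing D K]
variable (s : StarOperation D K)

open Classical in
/-- The closure operation on integral ideals induced by `s`. -/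
noncomputable def cl (I : Ideal D) : Ideal D :=
  if I = ⊥ then ⊥ else
    Submodule.comap (Algebra.linearMap D K) (s.star (I : FractionalIdeal D⁰ K) : Submodule D K)

theorem coe_ne {I : Ideal D} (h : I ≠ ⊥) : (I : FractionalIdeal D⁰ K) ≠ 0 :=
  FractionalIdeal.coeIdeal_ne_zero.2 h

theorem mem_cl {I : Ideal D} (h : I ≠ ⊥) {x : D} :
    x ∈ s.cl I ↔ algebraMap D K x ∈ s.star (I : FractionalIdeal D⁰ K) := by
  unfold cl
  rw [if_neg h]
  rfl

theorem cl_bot : s.cl ⊥ = ⊥ := by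
  unfold cl
  rw [if_pos rfl]

theorem star_one : s.star 1 = 1 := by
  have := s.star_spanSingleton 1 one_ne_zero
  simpa using this

theorem coe_cl {I : Ideal D} (h : I ≠ ⊥) :
    (s.cl I : FractionalIdeal D⁰ K) = s.star (I : FractionalIdeal D⁰ K) := by
  apply le_antisymm
  · intro x hx
    obtain ⟨y, hy, rfl⟩ := (FractionalIdeal.mem_coeIdeal D⁰).1 hx
    exact (s.mem_cl h).1 hy
  · intro x hx
    have h1 : s.star (I : FractionalIdeal D⁰ K) ≤ 1 := by
      have := s.star_mono _ 1 (coe_ne (K := K) h) one_ne_zero FractionalIdeal.coeIdeal_le_one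
      rwa [s.star_one] at this
    obtain ⟨y, rfl⟩ := (FractionalIdeal.mem_one_iff D⁰).1 (h1 hx)
    exact (FractionalIdeal.mem_coeIdeal D⁰).2 ⟨y, (s.mem_cl h).2 hx, rfl⟩

theorem le_cl (I : Ideal D) : I ≤ s.cl I := by
  by_cases h : I = ⊥
  · simp [h]
  · intro x hx
    exact (s.mem_cl h).2 (s.le_star _ (coe_ne h) ((FractionalIdeal.mem_coeIdeal D⁰).2 ⟨x, hx, rfl⟩))

theorem cl_ne {I : Ideal D} (h : I ≠ ⊥) : s.cl I ≠ ⊥ := fun h' =>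
  h (le_bot_iff.1 (h' ▸ s.le_cl I))

theorem cl_mono {I J : Ideal D} (h : I ≤ J) : s.cl I ≤ s.cl J := by
  by_cases hI : I = ⊥
  · simp [hI, cl_bot]
  · have hJ : J ≠ ⊥ := fun h' => hI (le_bot_iff.1 (h' ▸ h))
    intro x hx
    rw [mem_cl _ hI] at hx
    rw [mem_cl _ hJ]
    exact s.star_mono _ _ (coe_ne hI) (coe_ne hJ) (FractionalIdeal.coeIdeal_le_coeIdeal K |>.2 h) hx

theorem cl_cl (I : Ideal D) : s.cl (s.cl I) = s.cl I := by
  by_cases hI : I = ⊥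
  · simp [hI, cl_bot]
  · ext x
    rw [mem_cl _ (s.cl_ne hI), mem_cl _ hI, coe_cl _ hI, s.star_idem _ (coe_ne hI)]

theorem cl_le_iff {I J : Ideal D} : s.cl I ≤ s.cl J ↔ I ≤ s.cl J :=
  ⟨fun h => (s.le_cl I).trans h, fun h => (s.cl_mono h).trans (s.cl_cl J).le⟩

theorem smul_cl {I : Ideal D} {x y : D} (hy : y ∈ s.cl I) :
    x * y ∈ s.cl (Ideal.span {x} * I) := by
  by_cases hI : I = ⊥
  · simp only [hI, cl_bot, Ideal.mem_bot] at hy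
    simp [hy]
  by_cases hx : x = 0
  · simp [hx]
  have hxI : Ideal.span {x} * I ≠ ⊥ := by
    simp [hx, hI]
  have hx' : algebraMap D K x ≠ 0 := by simpa using hx
  rw [mem_cl _ hxI, FractionalIdeal.coeIdeal_mul, FractionalIdeal.coeIdeal_span_singleton,
    s.star_smul _ _ hx' (coe_ne hI), map_mul]
  exact FractionalIdeal.mul_mem_mul (FractionalIdeal.mem_spanSingleton_self _ _)
    ((s.mem_cl hI).1 hy)

theorem mul_cl_le (I J : Ideal D) : I * s.cl J ≤ s.cl (I * J) := by
  rw [Ideal.mul_le]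
  intro x hx y hy
  exact s.cl_mono (Ideal.mul_mono_left (by simpa using hx)) (s.smul_cl hy)

theorem cl_mul_cl (I J : Ideal D) : s.cl (I * s.cl J) = s.cl (I * J) :=
  le_antisymm (s.cl_le_iff.2 (s.mul_cl_le I J)) (s.cl_mono (Ideal.mul_mono_right (s.le_cl J)))

theorem cl_cl_mul (I J : Ideal D) : s.cl (s.cl I * J) = s.cl (I * J) := by
  rw [mul_comm, cl_mul_cl, mul_comm]

theorem cl_sup_cl (I J : Ideal D) : s.cl (I ⊔ s.cl J) = s.cl (I ⊔ J) :=
  le_antisymm (s.cl_le_iff.2 (sup_le (le_sup_left.trans (s.le_cl _)) (s.cl_mono le_sup_right)))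
    (s.cl_mono (sup_le_sup_left (s.le_cl J) _))

theorem cl_cl_sup (I J : Ideal D) : s.cl (s.cl I ⊔ J) = s.cl (I ⊔ J) := by
  rw [sup_comm, cl_sup_cl, sup_comm]

/-- comaximality in terms of `cl` -/
def Com (A B : Ideal D) : Prop := s.cl (A ⊔ B) = ⊤

theorem Com.symm {A B : Ideal D} (h : s.Com A B) : s.Com B A := by
  unfold Com at *
  rwa [sup_comm]

theorem Com.mono {A B A' B' : Ideal D} (h : s.Com A B) (hA : A ≤ A') (hB : B ≤ B') :
    s.Com A' B' :=
  top_le_iff.1 (h ▸ s.cl_mono (sup_le_sup hA hB))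

theorem Com.mul {A B C : Ideal D} (h : s.Com A B) (h' : s.Com A C) : s.Com A (B * C) := by
  unfold Com at *
  have h1 : s.cl ((A ⊔ B) * (A ⊔ C)) = ⊤ := by
    rw [← cl_mul_cl, h', ← cl_cl_mul, h]
    exact top_le_iff.1 (by simpa using s.le_cl (⊤ * ⊤))
  refine top_le_iff.1 (h1 ▸ s.cl_mono ?_)
  rw [Ideal.sup_mul, Ideal.mul_sup B]
  exact sup_le (Ideal.mul_le_left.trans le_sup_left)
    (sup_le (Ideal.mul_le_right.trans le_sup_left) le_sup_right)

theorem Com.cl_right {A B : Ideal D} : s.Com A (s.cl B) ↔ s.Com A B := by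
  unfold Com
  rw [cl_sup_cl]

theorem Com.prod {A : Ideal D} {W : Multiset (Ideal D)} (h : ∀ B ∈ W, s.Com A B) :
    s.Com A W.prod := by
  induction W using Multiset.induction_on with
  | empty =>
    unfold Com
    exact top_le_iff.1 (by simpa using s.le_cl (A ⊔ 1))
  | cons B W ih =>
    rw [Multiset.prod_cons]
    exact Com.mul s (h B (Multiset.mem_cons_self _ _))
      (ih fun C hC => h C (Multiset.mem_cons_of_mem hC))

theorem star_eq_iff {I J : Ideal D} (h : I ≠ ⊥) :
    s.star (I : FractionalIdeal D⁰ K) = (J : FractionalIdeal D⁰ K) ↔ s.cl I = J := by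
  rw [← coe_cl _ h, FractionalIdeal.coeIdeal_inj]

theorem star_eq_one_iff {I : Ideal D} (h : I ≠ ⊥) :
    s.star (I : FractionalIdeal D⁰ K) = 1 ↔ s.cl I = ⊤ := by
  rw [← FractionalIdeal.coeIdeal_top, star_eq_iff _ h]

theorem starComaximal_iff {I J : Ideal D} (h : I ≠ ⊥) : s.StarComaximal I J ↔ s.Com I J := by
  unfold StarComaximal Com
  rw [Submodule.add_eq_sup, star_eq_one_iff]
  exact fun h' => h (le_bot_iff.1 (h' ▸ le_sup_left))

/-- finite type -/
def FT (I : Ideal D) : Prop := ∃ J : Ideal D, J ≠ ⊥ ∧ J.FG ∧ s.cl J = I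

theorem finiteType_iff {I : Ideal D} : s.IsFiniteTypeStarIdeal I ↔ s.FT I := by
  unfold IsFiniteTypeStarIdeal FT
  refine exists_congr fun J => and_congr_right fun h => and_congr_right fun _ => s.star_eq_iff h

theorem FT.cl_eq {I : Ideal D} (h : s.FT I) : s.cl I = I := by
  obtain ⟨J, _, _, rfl⟩ := h
  exact s.cl_cl J

theorem FT.ne_bot {I : Ideal D} (h : s.FT I) : I ≠ ⊥ := by
  obtain ⟨J, h, _, rfl⟩ := h
  exact s.cl_ne h

theorem FT.isStar {I : Ideal D} (h : s.FT I) : s.IsStarIdeal I :=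
  ⟨h.ne_bot, (s.star_eq_iff h.ne_bot).2 h.cl_eq⟩

theorem FT.sup {I J : Ideal D} (h : s.FT I) (h' : s.FT J) : s.FT (s.cl (I ⊔ J)) := by
  obtain ⟨I, hI, fI, rfl⟩ := h
  obtain ⟨J, hJ, fJ, rfl⟩ := h'
  refine ⟨I ⊔ J, fun h' => hI (le_bot_iff.1 (h' ▸ le_sup_left)), Submodule.FG.sup fI fJ, ?_⟩
  rw [cl_sup_cl, cl_cl_sup]

theorem FT.mul {I J : Ideal D} (h : s.FT I) (h' : s.FT J) : s.FT (s.cl (I * J)) := by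
  obtain ⟨I, hI, fI, rfl⟩ := h
  obtain ⟨J, hJ, fJ, rfl⟩ := h'
  refine ⟨I * J, mul_ne_zero hI hJ, Ideal.FG.mul fI fJ, ?_⟩
  rw [cl_mul_cl, cl_cl_mul]

/-- homogeneous, in terms of `cl` -/
def Hom (I : Ideal D) : Prop := I ≠ ⊤ ∧ s.FT I ∧
  ∀ J J' : Ideal D, J ≠ ⊤ → J' ≠ ⊤ → s.FT J → s.FT J' → I ≤ J → I ≤ J' → ¬ s.Com J J'

theorem isHomog_iff {I : Ideal D} : s.IsHomog I ↔ s.Hom I := by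
  constructor
  · rintro ⟨h1, h2, h3, h4⟩
    refine ⟨h1, s.finiteType_iff.1 h3, fun J J' a b c d e f g => ?_⟩
    exact h4 J J' a b c.isStar d.isStar (s.finiteType_iff.2 c) (s.finiteType_iff.2 d) e f
      ((s.starComaximal_iff c.ne_bot).2 g)
  · rintro ⟨h1, h2, h3⟩
    refine ⟨h1, h2.isStar, s.finiteType_iff.2 h2, fun J J' a b c d e f g i j => ?_⟩
    exact h3 J J' a b (s.finiteType_iff.1 e) (s.finiteType_iff.1 f) g i
      ((s.starComaximal_iff c.1).1 j)

theorem Hom.pivot {I B C : Ideal D} (h : s.Hom I) (hB : s.FT B) (hC : s.FT C)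
    (h1 : ¬ s.Com I B) (h2 : ¬ s.Com I C) : ¬ s.Com B C := fun h3 =>
  h.2.2 (s.cl (I ⊔ B)) (s.cl (I ⊔ C)) h1 h2 (FT.sup s h.2.1 hB) (FT.sup s h.2.1 hC)
    (le_sup_left.trans (s.le_cl _)) (le_sup_left.trans (s.le_cl _))
    (Com.mono s h3 (le_sup_right.trans (s.le_cl _)) (le_sup_right.trans (s.le_cl _)))

theorem Hom.mul {I J : Ideal D} (hI : s.Hom I) (hJ : s.Hom J) (h : ¬ s.Com I J) :
    s.Hom (s.cl (I * J)) := by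
  refine ⟨fun h' => hI.1 ?_, FT.mul s hI.2.1 hJ.2.1, ?_⟩
  · have : s.cl (I * J) ≤ s.cl I := s.cl_mono Ideal.mul_le_left
    rw [h', hI.2.1.cl_eq] at this
    exact top_le_iff.1 this
  · intro L L' a b c d e f
    have hsym : ¬ s.Com J I := fun h' => h (Com.symm s h')
    have key : ∀ L : Ideal D, L ≠ ⊤ → s.FT L → s.cl (I * J) ≤ L → ¬ s.Com I L := by
      intro L hL fL hle h1
      have h2 : ¬ s.Com J L := by
        intro h2
        have h3 := Com.mul s (Com.symm s h1) (Com.symm s h2)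
        unfold Com at h3
        rw [sup_eq_left.2 ((s.le_cl _).trans hle), fL.cl_eq] at h3
        exact hL h3
      exact Hom.pivot s hJ hI.2.1 fL hsym h2 h1
    exact Hom.pivot s hI c d (key L a c e) (key L' b d f)

theorem not_com_self {I : Ideal D} (h : s.Hom I) : ¬ s.Com I I := by
  unfold Com
  rw [sup_idem, h.2.1.cl_eq]
  exact h.1

/-- A recursive-friendly notion of comaximal family of homogeneous ideals. -/
def Good (U : Multiset (Ideal D)) : Prop :=
  (∀ J ∈ U, s.Hom J) ∧ ∀ J W, U = J ::ₘ W → ∀ L ∈ W, s.Com J L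

theorem good_iff (U : Multiset (Ideal D)) :
    ((∀ J ∈ U, s.IsHomog J) ∧ U.Pairwise s.StarComaximal) ↔ s.Good U := by
  have hsymm : Std.Symm s.StarComaximal := ⟨fun a b h => by
    unfold StarComaximal at *
    rwa [add_comm]⟩
  induction U using Quotient.inductionOn with
  | h l =>
  have hp : Multiset.Pairwise s.StarComaximal (l : Multiset (Ideal D)) ↔
      l.Pairwise s.StarComaximal := Multiset.pairwise_coe_iff_pairwise
  rw [Multiset.quot_mk_to_coe, hp]
  constructor
  · rintro ⟨h1, h2⟩
    refine ⟨fun J hJ => s.isHomog_iff.1 (h1 J hJ), ?_⟩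
    intro J W
    induction W using Quotient.inductionOn with
    | h w =>
    intro hw L hL
    have hperm : l.Perm (J :: w) := by
      simpa using hw
    have h3 := (hperm.pairwise_iff (fun {a b} h => hsymm.symm a b h)).1 h2
    exact (s.starComaximal_iff (h1 J (by simp [hw])).2.1.1).1 ((List.pairwise_cons.1 h3).1 L (by simpa using hL))
  · rintro ⟨h1, h2⟩
    refine ⟨fun J hJ => s.isHomog_iff.2 (h1 J hJ), ?_⟩
    have aux : ∀ l' : List (Ideal D), l'.Sublist l → l'.Pairwise s.StarComaximal := by
      intro l'
      induction l' with
      | nil => intro _; exact List.Pairwise.nil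
      | cons a t ih =>
        intro hsub
        refine List.pairwise_cons.2 ⟨fun b hb => ?_, ih ((List.sublist_cons_self a t).trans hsub)⟩
        obtain ⟨W, hW⟩ := Multiset.le_iff_exists_add.1 (Multiset.coe_le.2 hsub.subperm)
        refine (s.starComaximal_iff (h1 a (by simpa using hsub.subset (by simp))).2.1.ne_bot).2
          (h2 a (↑t + W) ?_ b (by simp [hb]))
        rw [hW, ← Multiset.cons_coe, Multiset.cons_add]
    exact aux l (List.Sublist.refl l)

theorem good_cons {J : Ideal D} {W : Multiset (Ideal D)} :
    s.Good (J ::ₘ W) ↔ s.Hom J ∧ (∀ L ∈ W, s.Com J L) ∧ s.Good W := by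
  constructor
  · rintro ⟨h1, h2⟩
    refine ⟨h1 J (by simp), h2 J W rfl, fun L hL => h1 L (by simp [hL]), ?_⟩
    rintro L X rfl M hM
    exact h2 L (J ::ₘ X) (Multiset.cons_swap _ _ _) M (by simp [hM])
  · rintro ⟨h1, h2, h3, h4⟩
    refine ⟨fun L hL => ?_, ?_⟩
    · rcases Multiset.mem_cons.1 hL with rfl | hL
      · exact h1
      · exact h3 L hL
    · intro L X hX M hM
      rcases Multiset.cons_eq_cons.1 hX with ⟨rfl, rfl⟩ | ⟨hne, Y, rfl, rfl⟩
      · exact h2 M hM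
      · rcases Multiset.mem_cons.1 hM with rfl | hM
        · exact Com.symm s (h2 L (by simp))
        · exact h4 L Y rfl M hM

theorem exists_good (T : Multiset (Ideal D)) (hT : ∀ J ∈ T, s.Hom J) :
    ∃ U, s.Good U ∧ s.cl U.prod = s.cl T.prod := by
  induction T using Multiset.induction_on with
  | empty => exact ⟨0, ⟨by simp, by simp⟩, rfl⟩
  | cons I T ih =>
    obtain ⟨U, hU, hUT⟩ := ih fun J hJ => hT J (by simp [hJ])
    have hI := hT I (by simp)
    by_cases h : ∀ J ∈ U, s.Com I J
    · refine ⟨I ::ₘ U, s.good_cons.2 ⟨hI, h, hU⟩, ?_⟩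
      rw [Multiset.prod_cons, Multiset.prod_cons, ← cl_mul_cl, hUT, cl_mul_cl]
    · push Not at h
      obtain ⟨J, hJ, hIJ⟩ := h
      obtain ⟨W, rfl⟩ := Multiset.exists_cons_of_mem hJ
      obtain ⟨h1, h2, h3⟩ := s.good_cons.1 hU
      refine ⟨s.cl (I * J) ::ₘ W, s.good_cons.2 ⟨Hom.mul s hI h1 hIJ, fun L hL => ?_, h3⟩, ?_⟩
      · refine Com.symm s ((Com.cl_right s).2 (Com.mul s (Com.symm s ?_) (Com.symm s (h2 L hL))))
        by_contra h5
        exact Hom.pivot s hI h1.2.1 (h3.1 L hL).2.1 hIJ h5 (h2 L hL)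
      · rw [Multiset.prod_cons, Multiset.prod_cons, cl_cl_mul, ← cl_mul_cl _ I T.prod, ← hUT,
          cl_mul_cl, Multiset.prod_cons, mul_assoc]

theorem prod_le_of_mem {U : Multiset (Ideal D)} {J : Ideal D} (hJ : J ∈ U) : U.prod ≤ J := by
  obtain ⟨W, rfl⟩ := Multiset.exists_cons_of_mem hJ
  rw [Multiset.prod_cons]
  exact Ideal.mul_le_left

theorem Good.le {U V : Multiset (Ideal D)} (hU : s.Good U) (hV : s.Good V)
    (h : s.cl U.prod = s.cl V.prod) {J L : Ideal D} (hJ : J ∈ U) (hL : L ∈ V)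
    (hJL : ¬ s.Com J L) : J ≤ L := by
  have hLH := hV.1 L hL
  obtain ⟨W, rfl⟩ := Multiset.exists_cons_of_mem hJ
  obtain ⟨h1, h2, h3⟩ := s.good_cons.1 hU
  have hW : s.Com L W.prod := by
    refine Com.prod s fun B hB => ?_
    by_contra h5
    exact Hom.pivot s hLH h1.2.1 (h3.1 B hB).2.1 (fun h' => hJL (Com.symm s h')) h5 (h2 B hB)
  have e1 : J * s.cl (L ⊔ W.prod) ≤ L := by
    rw [← hLH.2.1.cl_eq]
    refine (s.mul_cl_le _ _).trans (s.cl_le_iff.2 ?_)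
    rw [Ideal.mul_sup]
    rw [hLH.2.1.cl_eq]
    refine sup_le Ideal.mul_le_right ?_
    rw [Multiset.prod_cons] at h
    refine (s.le_cl _).trans ?_
    rw [h]
    exact (s.cl_mono (prod_le_of_mem hL)).trans hLH.2.1.cl_eq.le
  rw [hW, Ideal.mul_top] at e1
  exact e1

theorem Good.subset {U V : Multiset (Ideal D)} (hU : s.Good U) (hV : s.Good V)
    (h : s.cl U.prod = s.cl V.prod) {J : Ideal D} (hJ : J ∈ U) : J ∈ V := by
  have hJH := hU.1 J hJ
  have : ∃ L ∈ V, ¬ s.Com J L := by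
    by_contra! h'
    have h2 := (Com.cl_right s).2 (Com.prod s h')
    have h4 : s.cl U.prod ≤ J := (s.cl_mono (prod_le_of_mem hJ)).trans hJH.2.1.cl_eq.le
    rw [← h] at h2
    exact not_com_self s hJH (Com.mono s h2 le_rfl h4)
  obtain ⟨L, hL, hJL⟩ := this
  have : J = L := le_antisymm (Good.le s hU hV h hJ hL hJL)
    (Good.le s hV hU h.symm hL hJ fun h' => hJL (Com.symm s h'))
  exact this ▸ hL

theorem Good.nodup {U : Multiset (Ideal D)} (hU : s.Good U) : U.Nodup := by
  induction U using Multiset.induction_on with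
  | empty => exact Multiset.nodup_zero
  | cons J W ih =>
    obtain ⟨h1, h2, h3⟩ := s.good_cons.1 hU
    exact Multiset.nodup_cons.2 ⟨fun h => not_com_self s h1 (h2 J h), ih h3⟩

theorem prod_ne_bot {U : Multiset (Ideal D)} (hU : ∀ J ∈ U, s.Hom J) : U.prod ≠ ⊥ := by
  have : U.prod ≠ 0 := Multiset.prod_ne_zero fun h => FT.ne_bot s (hU 0 h).2.1 rfl
  exact this

end StarOperation

/-- If `A = (I₁⋯Iₘ)^*` for finitely many `*`-homogeneous ideals, then `A` is
expressible as `A = (J₁⋯J_r)^*` with the `Jᵢ` mutually `*`-comaximal `*`-homogeneous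
ideals, uniquely up to order (i.e. the multiset of factors is unique). -/
theorem unique_comaximal_homog_factorization {D K : Type*} [CommRing D] [IsDomain D]
    [Field K] [Algebra D K] [IsFractionRing D K] (s : StarOperation D K)
    (hs : s.FiniteCharacter) (A : Ideal D) (T : Multiset (Ideal D))
    (hT : ∀ J ∈ T, s.IsHomog J)
    (hA : s.star ((T.prod : Ideal D) : FractionalIdeal D⁰ K) = (A : FractionalIdeal D⁰ K)) :
    ∃ U : Multiset (Ideal D), (∀ J ∈ U, s.IsHomog J) ∧ U.Pairwise s.StarComaximal ∧
      s.star ((U.prod : Ideal D) : FractionalIdeal D⁰ K) = (A : FractionalIdeal D⁰ K) ∧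
      ∀ V : Multiset (Ideal D), (∀ J ∈ V, s.IsHomog J) → V.Pairwise s.StarComaximal →
        s.star ((V.prod : Ideal D) : FractionalIdeal D⁰ K) = (A : FractionalIdeal D⁰ K) →
        V = U := by
  have hT' : ∀ J ∈ T, s.Hom J := fun J hJ => s.isHomog_iff.1 (hT J hJ)
  rw [s.star_eq_iff (s.prod_ne_bot hT')] at hA
  obtain ⟨U, hU, hUT⟩ := s.exists_good T hT'
  obtain ⟨h1, h2⟩ := (s.good_iff U).2 hU
  refine ⟨U, h1, h2, (s.star_eq_iff (s.prod_ne_bot hU.1)).2 (hUT.trans hA), ?_⟩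
  intro V hV1 hV2 hVA
  have hV := (s.good_iff V).1 ⟨hV1, hV2⟩
  rw [s.star_eq_iff (s.prod_ne_bot hV.1)] at hVA
  have h : s.cl U.prod = s.cl V.prod := (hUT.trans hA).trans hVA.symm
  exact (Multiset.Nodup.ext hV.nodup hU.nodup).2 fun J =>
    ⟨fun hJ => hV.subset s hU h.symm hJ, fun hJ => hU.subset s hV h hJ⟩
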